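/- For every real constant C, the set {θ ∈ ℝ : θ is irrational and L₀(θ) > C} has full Lebesgue measure in ℝ, i.e. its complement is Lebesgue-null. -/

import Mathlib

/-!
The proof is an application of Lebesgue's density theorem.

Fix `L ≥ 2`, `L > C`. If an irrational `θ` has `L₀(θ) ≤ C`, then `θ` lies in one of the sets
`badSet L N` of irrationals with `|θ - p_{2i}/q_{2i}| ≥ 1/(L q_{2i}²)` for all `i ≥ N`.
Let `θ ∈ badSet L N` and let `p/q` be a convergent of `θ` of even index `2i`, with `i ≥ max N 1`.
Since even convergents lie below `θ`, one has `p/q < θ < p/q + 1/q²`. On the other side, every `x`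
in `J = (p/q, p/q + 1/(L q²))` can be written as `(p β + p') / (q β + q')` with `β > 1`, where
`p'/q'` is the preceding convergent, so that `x` has the same partial quotients as `θ` up to index
`2i`; hence `p/q` is the convergent of index `2i` of `x` too (`cfConv_eq_of_mem`), and
`x ∉ badSet L N`. So the ball of radius `1/q²` around `θ` contains an interval `J` free of points of
`badSet L N`, filling the proportion `1/(2L)` of the ball. As `q → ∞`, `θ` is not a density point
of `badSet L N`. A set none of whose points is a density point is null.
-/

open Filter Set MeasureTheory

/-- Complete quotients of `θ`: `α₀ = θ`, `α_{n+1} = 1/(αₙ - ⌊αₙ⌋)`. -/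
noncomputable def cfAlpha (θ : ℝ) : ℕ → ℝ
  | 0 => θ
  | n + 1 => (Int.fract (cfAlpha θ n))⁻¹

/-- Partial quotients `aₙ = ⌊αₙ⌋` of the continued fraction expansion of `θ`. -/
noncomputable def cfA (θ : ℝ) (n : ℕ) : ℤ := ⌊cfAlpha θ n⌋

/-- Numerators `pₙ` of the convergents of `θ`. -/
noncomputable def cfP (θ : ℝ) : ℕ → ℤ
  | 0 => cfA θ 0
  | 1 => cfA θ 1 * cfA θ 0 + 1
  | n + 2 => cfA θ (n + 2) * cfP θ (n + 1) + cfP θ n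

/-- Denominators `qₙ` of the convergents of `θ`. -/
noncomputable def cfQ (θ : ℝ) : ℕ → ℤ
  | 0 => 1
  | 1 => cfA θ 1
  | n + 2 => cfA θ (n + 2) * cfQ θ (n + 1) + cfQ θ n

/-- The `n`-th convergent `pₙ/qₙ` of `θ`. -/
noncomputable def cfConv (θ : ℝ) (n : ℕ) : ℝ := (cfP θ n : ℝ) / (cfQ θ n : ℝ)

/-- `S₀(θ)`: the set of `L > 0` such that `|θ - p_{2i}/q_{2i}| < 1/(L q_{2i}²)`
for infinitely many `i`. -/
def S0 (θ : ℝ) : Set ℝ :=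
  {L : ℝ | 0 < L ∧
    {i : ℕ | |θ - cfConv θ (2 * i)| < 1 / (L * ((cfQ θ (2 * i) : ℝ)) ^ 2)}.Infinite}

/-- `S₁(θ)`: the set of `L > 0` such that `|θ - p_{2i+1}/q_{2i+1}| < 1/(L q_{2i+1}²)`
for infinitely many `i`. -/
def S1 (θ : ℝ) : Set ℝ :=
  {L : ℝ | 0 < L ∧
    {i : ℕ | |θ - cfConv θ (2 * i + 1)| < 1 / (L * ((cfQ θ (2 * i + 1) : ℝ)) ^ 2)}.Infinite}

/-- The even Lagrange number `L₀(θ) = sup S₀(θ)`, as an extended real. -/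
noncomputable def L0 (θ : ℝ) : EReal := sSup ((fun L : ℝ => (L : EReal)) '' S0 θ)

/-- The odd Lagrange number `L₁(θ) = sup S₁(θ)`, as an extended real. -/
noncomputable def L1 (θ : ℝ) : EReal := sSup ((fun L : ℝ => (L : EReal)) '' S1 θ)

/-- `L₀(θ)` is attainable if the supremum defining it is a maximum. -/
def L0Attainable (θ : ℝ) : Prop := ∃ L ∈ S0 θ, (L : EReal) = L0 θ

/-- `L₁(θ)` is attainable if the supremum defining it is a maximum. -/
def L1Attainable (θ : ℝ) : Prop := ∃ L ∈ S1 θ, (L : EReal) = L1 θ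

/-- The value of the reversed finite continued fraction `[0; aₙ, a_{n-1}, …, a₁]`. -/
noncomputable def cfRev (θ : ℝ) : ℕ → ℝ
  | 0 => 0
  | n + 1 => ((cfA θ (n + 1) : ℝ) + cfRev θ n)⁻¹

/-! ### Continued fractions -/

lemma cfAlpha_shift (θ : ℝ) (n : ℕ) : cfAlpha (Int.fract θ)⁻¹ n = cfAlpha θ (n + 1) := by
  induction n with
  | zero => rfl
  | succ n ih => rw [cfAlpha, ih]; rfl

lemma cfAlpha_irrational {θ : ℝ} (h : Irrational θ) (n : ℕ) : Irrational (cfAlpha θ n) := by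
  induction n with
  | zero => exact h
  | succ n ih => exact (ih.sub_intCast ⌊cfAlpha θ n⌋).inv

lemma fract_pos_of_irrational {x : ℝ} (h : Irrational x) : 0 < Int.fract x :=
  lt_of_le_of_ne (Int.fract_nonneg x) fun h0 => (h.sub_intCast ⌊x⌋).ne_zero h0.symm

lemma one_lt_cfAlpha_succ {θ : ℝ} (h : Irrational θ) (n : ℕ) : 1 < cfAlpha θ (n + 1) :=
  (one_lt_inv₀ (fract_pos_of_irrational (cfAlpha_irrational h n))).2 (Int.fract_lt_one _)

lemma one_le_cfA_succ {θ : ℝ} (h : Irrational θ) (n : ℕ) : 1 ≤ cfA θ (n + 1) :=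
  Int.le_floor.2 (by exact_mod_cast (one_lt_cfAlpha_succ h n).le)

lemma cfQ_pos {θ : ℝ} (h : Irrational θ) (n : ℕ) : 1 ≤ cfQ θ n ∧ 1 ≤ cfQ θ (n + 1) := by
  induction n with
  | zero => exact ⟨le_rfl, one_le_cfA_succ h 0⟩
  | succ n ih =>
    refine ⟨ih.2, ?_⟩
    have := one_le_cfA_succ h (n + 1)
    rw [cfQ]
    nlinarith [ih.1, ih.2]

lemma cfQ_lt_succ {θ : ℝ} (h : Irrational θ) (n : ℕ) : cfQ θ (n + 1) + 1 ≤ cfQ θ (n + 2) := by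
  have := one_le_cfA_succ h (n + 1)
  have h2 := cfQ_pos h n
  rw [cfQ]
  nlinarith [h2.1, h2.2]

lemma le_cfQ {θ : ℝ} (h : Irrational θ) (n : ℕ) : ((n : ℤ) + 1) ≤ cfQ θ (n + 1) := by
  induction n with
  | zero => simpa using (cfQ_pos h 0).2
  | succ n ih => have := cfQ_lt_succ h n; push_cast; linarith

lemma cf_det (θ : ℝ) (n : ℕ) :
    cfP θ (n + 1) * cfQ θ n - cfP θ n * cfQ θ (n + 1) = (-1) ^ n := by
  induction n with
  | zero => simp [cfP, cfQ]; ring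
  | succ n ih => rw [cfP, cfQ, pow_succ, ← ih]; ring

/-- The Möbius relation `θ = (p_{n+1} α_{n+2} + pₙ) / (q_{n+1} α_{n+2} + qₙ)`, cleared of
denominators; it needs the expansion not to have terminated before step `n + 2`. -/
lemma cf_mobius (θ : ℝ) (n : ℕ) (h : ∀ j ≤ n + 1, Int.fract (cfAlpha θ j) ≠ 0) :
    θ * (cfQ θ (n + 1) * cfAlpha θ (n + 2) + cfQ θ n)
      = cfP θ (n + 1) * cfAlpha θ (n + 2) + cfP θ n := by
  have key : ∀ m ≤ n + 1,
      cfAlpha θ m * cfAlpha θ (m + 1) = cfA θ m * cfAlpha θ (m + 1) + 1 := by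
    intro m hm
    have h0 := h m hm
    have h1 : Int.fract (cfAlpha θ m) * cfAlpha θ (m + 1) = 1 := mul_inv_cancel₀ h0
    rw [Int.fract] at h1
    change (cfAlpha θ m - cfA θ m) * cfAlpha θ (m + 1) = 1 at h1
    linarith
  have hne : ∀ m ≤ n + 1, cfAlpha θ (m + 1) ≠ 0 := fun m hm => inv_ne_zero (h m hm)
  induction n with
  | zero =>
    have k0 := key 0 (by norm_num)
    have k1 := key 1 (by norm_num)
    have hn := hne 0 (by norm_num)
    simp only [zero_add] at *
    rw [show cfAlpha θ 0 = θ from rfl] at k0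
    simp only [cfP, cfQ]
    push_cast
    apply mul_left_cancel₀ hn
    linear_combination (cfA θ 1 * cfAlpha θ 2 + 1 : ℝ) * k0 - k1
  | succ n ih =>
    have ih' := ih (fun j hj => h j (by lia)) (fun j hj => key j (by lia))
      (fun j hj => hne j (by lia))
    have k := key (n + 2) (by lia)
    simp only [show n + 1 + 1 = n + 2 from rfl, show n + 1 + 2 = n + 3 from rfl] at *
    rw [cfP, cfQ]
    push_cast
    linear_combination (cfAlpha θ (n + 3)) * ih'
      - (θ * cfQ θ (n + 1) - cfP θ (n + 1)) * k

/-- Prepending `⌊θ⌋` to a number `y > 1` makes `y` the first complete quotient. -/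
lemma prepend_aux (θ y : ℝ) (hy : 1 < y) :
    Int.fract ((⌊θ⌋ : ℝ) + y⁻¹) = y⁻¹ ∧ ⌊(⌊θ⌋ : ℝ) + y⁻¹⌋ = ⌊θ⌋ := by
  have h0 : 0 ≤ y⁻¹ := by positivity
  have h1 : y⁻¹ < 1 := inv_lt_one_of_one_lt₀ hy
  refine ⟨?_, ?_⟩
  · rw [Int.fract_intCast_add, Int.fract_eq_self.2 ⟨h0, h1⟩]
  · rw [Int.floor_intCast_add, Int.floor_eq_zero_iff.2 ⟨h0, h1⟩, add_zero]

/-- The partial quotients `a₀, …, aₙ` of an irrational number can be followed by any complete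
quotient `β > 1`. -/
lemma exists_cfAlpha_eq (n : ℕ) {θ β : ℝ} (hθ : Irrational θ) (hβ : 1 < β) :
    ∃ x : ℝ, (⌊θ⌋ : ℝ) < x ∧ (∀ j ≤ n, cfA x j = cfA θ j) ∧
      (∀ j ≤ n, Int.fract (cfAlpha x j) ≠ 0) ∧ cfAlpha x (n + 1) = β := by
  induction n generalizing θ with
  | zero =>
    have hp : 0 < β⁻¹ := by positivity
    refine ⟨⌊θ⌋ + β⁻¹, by linarith, ?_, ?_, ?_⟩
    · intro j hj
      obtain rfl : j = 0 := by lia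
      exact (prepend_aux θ β hβ).2
    · intro j hj
      obtain rfl : j = 0 := by lia
      change Int.fract ((⌊θ⌋ : ℝ) + β⁻¹) ≠ 0
      rw [(prepend_aux θ β hβ).1]; exact hp.ne'
    · change (Int.fract ((⌊θ⌋ : ℝ) + β⁻¹))⁻¹ = β
      rw [(prepend_aux θ β hβ).1, inv_inv]
  | succ n ih =>
    have hθ' : Irrational (Int.fract θ)⁻¹ := cfAlpha_irrational hθ 1
    obtain ⟨y, hy, hA, hF, hb⟩ := ih hθ'
    have h1y : 1 < y := by
      have : (1 : ℤ) ≤ ⌊(Int.fract θ)⁻¹⌋ := one_le_cfA_succ hθ 0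
      have : (1 : ℝ) ≤ ⌊(Int.fract θ)⁻¹⌋ := by exact_mod_cast this
      linarith
    have hp : 0 < y⁻¹ := by positivity
    have hs : ∀ j, cfAlpha ((⌊θ⌋ : ℝ) + y⁻¹) (j + 1) = cfAlpha y j := by
      intro j
      rw [← cfAlpha_shift, (prepend_aux θ y h1y).1, inv_inv]
    refine ⟨⌊θ⌋ + y⁻¹, by linarith, ?_, ?_, ?_⟩
    · rintro (_ | j) hj
      · exact (prepend_aux θ y h1y).2
      · have := hA j (by lia)
        rw [cfA, cfA, cfAlpha_shift] at this
        rw [cfA, cfA, hs, this]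
    · rintro (_ | j) hj
      · change Int.fract ((⌊θ⌋ : ℝ) + y⁻¹) ≠ 0
        rw [(prepend_aux θ y h1y).1]; exact hp.ne'
      · rw [hs]; exact hF j (by lia)
    · rw [hs, hb]

lemma cfPQ_congr {x θ : ℝ} (n : ℕ) (h : ∀ j ≤ n + 1, cfA x j = cfA θ j) :
    (cfP x n = cfP θ n ∧ cfQ x n = cfQ θ n) ∧
      cfP x (n + 1) = cfP θ (n + 1) ∧ cfQ x (n + 1) = cfQ θ (n + 1) := by
  induction n with
  | zero => simp [cfP, cfQ, h 0 (by lia), h 1 (by lia)]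
  | succ n ih =>
    obtain ⟨⟨h1, h2⟩, h3, h4⟩ := ih fun j hj => h j (by lia)
    refine ⟨⟨h3, h4⟩, ?_, ?_⟩
    · rw [cfP, cfP, h _ le_rfl, h1, h3]
    · rw [cfQ, cfQ, h _ le_rfl, h2, h4]

/-- Even convergents of index at least `2` approximate from below, with the exact error
`1 / (q (q α + q'))`. -/
lemma sub_cfConv_even {θ : ℝ} (k : ℕ) (h : ∀ j ≤ 2 * k + 2, Int.fract (cfAlpha θ j) ≠ 0)
    (hq : (0 : ℝ) < cfQ θ (2 * k + 2))
    (hd : (0 : ℝ) < cfQ θ (2 * k + 2) * cfAlpha θ (2 * k + 3) + cfQ θ (2 * k + 1)) :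
    θ - cfConv θ (2 * k + 2) = 1 / (cfQ θ (2 * k + 2) *
      (cfQ θ (2 * k + 2) * cfAlpha θ (2 * k + 3) + cfQ θ (2 * k + 1))) := by
  have hm := cf_mobius θ (2 * k + 1) h
  have hdet := cf_det θ (2 * k + 1)
  rw [Odd.neg_one_pow ⟨k, rfl⟩] at hdet
  have hdet' : (cfP θ (2 * k + 2) : ℝ) * cfQ θ (2 * k + 1)
      - cfP θ (2 * k + 1) * cfQ θ (2 * k + 2) = -1 := by exact_mod_cast hdet
  simp only [show 2 * k + 1 + 1 = 2 * k + 2 from rfl, show 2 * k + 1 + 2 = 2 * k + 3 from rfl] at hm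
  rw [cfConv, eq_div_iff (by positivity)]
  field_simp
  linear_combination (cfQ θ (2 * k + 2) : ℝ) * hm - hdet'

lemma fract_cfAlpha_ne_zero {θ : ℝ} (h : Irrational θ) (j : ℕ) :
    Int.fract (cfAlpha θ j) ≠ 0 :=
  (fract_pos_of_irrational (cfAlpha_irrational h j)).ne'

lemma cfQ_cast_pos {θ : ℝ} (h : Irrational θ) (n : ℕ) : (1 : ℝ) ≤ cfQ θ n := by
  exact_mod_cast (cfQ_pos h n).1

lemma sub_cfConv_even_mem {θ : ℝ} (hθ : Irrational θ) (k : ℕ) :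
    0 < θ - cfConv θ (2 * k + 2) ∧
      θ - cfConv θ (2 * k + 2) < 1 / (cfQ θ (2 * k + 2) : ℝ) ^ 2 := by
  have hq := cfQ_cast_pos hθ (2 * k + 2)
  have hq' := cfQ_cast_pos hθ (2 * k + 1)
  have ha := one_lt_cfAlpha_succ hθ (2 * k + 2)
  simp only [show 2 * k + 2 + 1 = 2 * k + 3 from rfl] at ha
  rw [sub_cfConv_even k (fun j _ => fract_cfAlpha_ne_zero hθ j) (by positivity) (by positivity)]
  refine ⟨by positivity, ?_⟩
  apply one_div_lt_one_div_of_lt (by positivity)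
  nlinarith [mul_pos (show (0 : ℝ) < cfQ θ (2 * k + 2) by positivity)
    (show (0 : ℝ) < cfQ θ (2 * k + 2) by positivity)]

/-- A number slightly above an even convergent `p/q` of `θ` has `p/q` as convergent of the same
index. -/
lemma cfConv_eq_of_mem {θ x L : ℝ} (hθ : Irrational θ) (hL : 2 ≤ L) (k : ℕ)
    (h1 : cfConv θ (2 * k + 2) < x)
    (h2 : x < cfConv θ (2 * k + 2) + 1 / (L * (cfQ θ (2 * k + 2) : ℝ) ^ 2)) :
    cfConv x (2 * k + 2) = cfConv θ (2 * k + 2) ∧ cfQ x (2 * k + 2) = cfQ θ (2 * k + 2) := by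
  have hq := cfQ_cast_pos hθ (2 * k + 2)
  have hq' := cfQ_cast_pos hθ (2 * k + 1)
  have hqq : (cfQ θ (2 * k + 1) : ℝ) ≤ cfQ θ (2 * k + 2) := by
    have := cfQ_lt_succ hθ (2 * k)
    exact_mod_cast (by linarith : cfQ θ (2 * k + 1) ≤ cfQ θ (2 * k + 2))
  set q : ℝ := (cfQ θ (2 * k + 2) : ℝ) with hqdef
  set q' : ℝ := (cfQ θ (2 * k + 1) : ℝ) with hqdef'
  have ht : 0 < x - cfConv θ (2 * k + 2) := by linarith
  have ht2 : x - cfConv θ (2 * k + 2) < 1 / (L * q ^ 2) := by linarith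
  set t := x - cfConv θ (2 * k + 2) with htdef
  -- The complete quotient of `x` is found by solving `t = 1 / (q (q β + q'))`.
  obtain ⟨β, hβ⟩ : ∃ β, β = (1 / (q * t) - q') / q := ⟨_, rfl⟩
  have hqβ : q * β + q' = 1 / (q * t) := by
    rw [hβ]; field_simp; ring
  have hβ1 : 1 < β := by
    have h3 : L * q < 1 / (q * t) := by
      rw [lt_div_iff₀ (by positivity)] at ht2 ⊢
      nlinarith
    nlinarith
  obtain ⟨y, -, hA, hF, hb⟩ := exists_cfAlpha_eq (2 * k + 2) hθ hβ1
  obtain ⟨⟨e1, e2⟩, e3, e4⟩ := cfPQ_congr (2 * k + 1) hA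
  simp only [show 2 * k + 1 + 1 = 2 * k + 2 from rfl] at e3 e4
  simp only [show 2 * k + 2 + 1 = 2 * k + 3 from rfl] at hb
  have hc : cfConv y (2 * k + 2) = cfConv θ (2 * k + 2) := by rw [cfConv, cfConv, e3, e4]
  have hy : y = x := by
    have := sub_cfConv_even (θ := y) k hF (by rw [e4]; positivity)
      (by rw [e4, e2, hb]; positivity)
    rw [hc, e4, e2, hb, ← hqdef, ← hqdef', hqβ] at this
    have h4 : 1 / (q * (1 / (q * t))) = t := by field_simp
    rw [h4] at this
    linarith
  subst hy
  exact ⟨hc, e4⟩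

/-! ### Measure theory -/

/-- The irrational numbers none of whose even convergents of index at least `2N` approximates
better than `1 / (L q²)`. -/
def badSet (L : ℝ) (N : ℕ) : Set ℝ :=
  {θ | Irrational θ ∧ ∀ i ≥ N,
    ¬ |θ - cfConv θ (2 * i)| < 1 / (L * ((cfQ θ (2 * i) : ℝ)) ^ 2)}

/-- Around a point of `badSet L N` there are arbitrarily small balls of which the set misses the
proportion `1 / (2L)`. -/
lemma badSet_density_le {L : ℝ} (hL : 2 ≤ L) {N : ℕ} {θ : ℝ} (h : θ ∈ badSet L N) {k : ℕ}
    (hk : N ≤ k) :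
    volume (badSet L N ∩ Metric.closedBall θ (1 / (cfQ θ (2 * k + 2) : ℝ) ^ 2)) /
      volume (Metric.closedBall θ (1 / (cfQ θ (2 * k + 2) : ℝ) ^ 2))
      ≤ ENNReal.ofReal (1 - 1 / (2 * L)) := by
  obtain ⟨hθ, -⟩ := h
  obtain ⟨m1, m2⟩ := sub_cfConv_even_mem hθ k
  have hq := cfQ_cast_pos hθ (2 * k + 2)
  have hmem := fun x => cfConv_eq_of_mem (x := x) hθ hL k
  set c := cfConv θ (2 * k + 2)
  set q : ℝ := (cfQ θ (2 * k + 2) : ℝ)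
  set r : ℝ := 1 / q ^ 2 with hr
  have hr0 : 0 < r := by positivity
  have hrL : 1 / (L * q ^ 2) = r / L := by rw [hr]; field_simp
  have hrL2 : r / L ≤ r / 2 := by gcongr
  have hrL0 : 0 < r / L := by positivity
  have hsub : badSet L N ∩ Metric.closedBall θ r ⊆
      Metric.closedBall θ r \ Ioo c (c + r / L) := by
    rintro x ⟨hx, hxb⟩
    refine ⟨hxb, fun ⟨hx1, hx2⟩ => ?_⟩
    rw [← hrL] at hx2
    obtain ⟨e1, e2⟩ := hmem x hx1 hx2
    apply hx.2 (k + 1) (by lia)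
    rw [show 2 * (k + 1) = 2 * k + 2 by ring, e1, e2, abs_lt]
    have : 0 < 1 / (L * q ^ 2) := by rw [hrL]; exact hrL0
    constructor <;> linarith
  have hJ : Ioo c (c + r / L) ⊆ Metric.closedBall θ r := by
    rintro x ⟨hx1, hx2⟩
    rw [Metric.mem_closedBall, Real.dist_eq, abs_le]
    constructor <;> linarith
  have hvol : volume (badSet L N ∩ Metric.closedBall θ r) ≤ ENNReal.ofReal (2 * r - r / L) := by
    refine (measure_mono hsub).trans ?_
    rw [measure_sdiff hJ measurableSet_Ioo.nullMeasurableSet (by simp), Real.volume_closedBall,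
      Real.volume_Ioo, ← ENNReal.ofReal_sub _ (by linarith)]
    apply le_of_eq; congr 1; ring
  rw [Real.volume_closedBall]
  refine (ENNReal.div_le_div_right hvol _).trans ?_
  rw [← ENNReal.ofReal_div_of_pos (by positivity)]
  apply le_of_eq; congr 1
  field_simp

lemma volume_badSet {L : ℝ} (hL : 2 ≤ L) (N : ℕ) : volume (badSet L N) = 0 := by
  have hd := IsUnifLocDoublingMeasure.ae_tendsto_measure_inter_div (volume : Measure ℝ)
    (badSet L N) 1
  rw [ae_iff] at hd
  refine measure_mono_null (fun θ hθ => ?_) (le_antisymm (hd ▸ Measure.le_restrict_apply _ _) bot_le)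
  refine ⟨fun hP => ?_, hθ⟩
  have hir := hθ.1
  have hr : Tendsto (fun k : ℕ => 1 / (cfQ θ (2 * k + 2) : ℝ) ^ 2) atTop (nhdsWithin 0 (Ioi 0)) := by
    rw [tendsto_nhdsWithin_iff]
    constructor
    · refine squeeze_zero (fun k => by positivity) (fun k => ?_)
        tendsto_one_div_add_atTop_nhds_zero_nat
      have h1 := le_cfQ hir (2 * k + 1)
      have h2 : (((2 * k + 1 : ℕ) : ℝ)) + 1 ≤ cfQ θ (2 * k + 2) := by exact_mod_cast h1
      push_cast at h2
      apply one_div_le_one_div_of_le (by positivity)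
      nlinarith [(Nat.cast_nonneg k : (0 : ℝ) ≤ k)]
    · filter_upwards with k
      have := cfQ_cast_pos hir (2 * k + 2)
      exact mem_Ioi.2 (by positivity)
  have hlim := hP (fun _ : ℕ => θ) _ hr (by
    filter_upwards with k
    rw [one_mul]
    exact Metric.mem_closedBall_self (by positivity))
  have hle : (1 : ENNReal) ≤ ENNReal.ofReal (1 - 1 / (2 * L)) :=
    le_of_tendsto hlim ((eventually_ge_atTop N).mono fun k hk => badSet_density_le hL hθ hk)
  rw [← ENNReal.ofReal_one, ENNReal.ofReal_le_ofReal_iff'] at hle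
  have : 0 < 1 / (2 * L) := by positivity
  rcases hle with h | h <;> linarith

/-- For any real constant `C`, the set `{θ | θ irrational and L₀(θ) > C}` has full
Lebesgue measure in `ℝ`. -/
theorem even_lagrange_gt_const_full_measure (C : ℝ) :
    volume ({θ : ℝ | Irrational θ ∧ (C : EReal) < L0 θ})ᶜ = 0 := by
  obtain ⟨L, hCL, hL⟩ : ∃ L : ℝ, C < L ∧ 2 ≤ L :=
    ⟨max (C + 1) 2, lt_of_lt_of_le (by linarith) (le_max_left _ _), le_max_right _ _⟩
  have hrat : volume {θ : ℝ | ¬ Irrational θ} = 0 := by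
    apply Set.Countable.measure_zero
    exact (Set.countable_range ((↑) : ℚ → ℝ)).mono fun θ h => not_not.1 h
  refine measure_mono_null (t := {θ : ℝ | ¬ Irrational θ} ∪ ⋃ N, badSet L N) ?_
    (measure_union_null hrat (measure_iUnion_null (volume_badSet hL)))
  intro θ hθ
  by_cases hir : Irrational θ
  swap
  · exact Or.inl hir
  right
  by_contra hbad
  apply hθ
  refine ⟨hir, lt_of_lt_of_le (EReal.coe_lt_coe_iff.2 hCL) (le_sSup ⟨L, ⟨by linarith, ?_⟩, rfl⟩)⟩
  rw [← Nat.frequently_atTop_iff_infinite, frequently_atTop]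
  intro N
  by_contra hN
  push Not at hN
  exact hbad (mem_iUnion.2 ⟨N, hir, fun i hi => not_lt.2 (hN i hi)⟩)
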